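/- arXiv:2402.05341 — 10 statements merged into one kernel-verified Lean document; each statement's English description precedes it below -/
import Mathlib

section
/- Suppose a_2 = −a_4 + (1/2)a_3. Then for every smooth solution u of E[u] = 0, the conservation law ∂_t T_1 + ∂_x X_1 = 0 holds identically in (x,t), where T_1 = u and X_1 = u_{6x} + a_7 u u_{4x} + (a_6 − a_7) u_x u_{3x} + ((a_5 − a_6 + a_7)/2) u_{2x}^2 + a_4 u^2 u_{2x} + (−a_4 + (1/2)a_3) u u_x^2 + (a_1/4) u^4. -/
/-!
Differentiating the flux `X₁` in `x` by the product rule gives exactly the non-`u_t` part of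
`E[u]`: the terms `u_x u_{4x}` and `u_{2x} u_{3x}` combine to the coefficients `a6` and `a5`, and
`a4 u² u_{2x} + a2 u u_x²` contributes `(2 a4 + 2 a2) u u_x u_{2x} = a3 u u_x u_{2x}` by the
constraint on `a2`. So the divergence is `E[u]`, which vanishes on solutions. The analytic input
is `hasDerivAt_dxN`: the `x`-derivatives of a smooth `u` are differentiable in `x`.
-/

/-- The n-th partial derivative of `u` with respect to `x`. -/
noncomputable def dxN (n : ℕ) (u : ℝ × ℝ → ℝ) (x t : ℝ) : ℝ :=
  iteratedDeriv n (fun x' => u (x', t)) x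

/-- The partial derivative of `u` with respect to `t`. -/
noncomputable def dtU (u : ℝ × ℝ → ℝ) (x t : ℝ) : ℝ :=
  deriv (fun t' => u (x, t')) t

/-- The left-hand side `E[u]` of the generalized seventh-order KdV equation
`u_t + a1 u^3 u_x + a2 u_x^3 + a3 u u_x u_{2x} + a4 u^2 u_{3x} + a5 u_{2x} u_{3x}
 + a6 u_x u_{4x} + a7 u u_{5x} + u_{7x} = 0`. -/
noncomputable def kdvE (a1 a2 a3 a4 a5 a6 a7 : ℝ) (u : ℝ × ℝ → ℝ) (x t : ℝ) : ℝ :=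
  dtU u x t
    + a1 * (u (x, t)) ^ 3 * dxN 1 u x t
    + a2 * (dxN 1 u x t) ^ 3
    + a3 * u (x, t) * dxN 1 u x t * dxN 2 u x t
    + a4 * (u (x, t)) ^ 2 * dxN 3 u x t
    + a5 * dxN 2 u x t * dxN 3 u x t
    + a6 * dxN 1 u x t * dxN 4 u x t
    + a7 * u (x, t) * dxN 5 u x t
    + dxN 7 u x t

theorem hasDerivAt_dxN {u : ℝ × ℝ → ℝ} (hu : ContDiff ℝ (⊤ : ℕ∞) u) (n : ℕ) (x t : ℝ) :
    HasDerivAt (fun x' => dxN n u x' t) (dxN (n + 1) u x t) x := by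
  have hslice : ContDiff ℝ (⊤ : ℕ∞) (fun x' => u (x', t)) :=
    hu.comp (contDiff_id.prodMk contDiff_const)
  have hdiff : Differentiable ℝ (iteratedDeriv n (fun x' => u (x', t))) :=
    hslice.differentiable_iteratedDeriv n (by exact_mod_cast ENat.natCast_lt_top n)
  simpa only [dxN, iteratedDeriv_succ] using (hdiff x).hasDerivAt

/-- if `a2 = -a4 + (1/2) a3`, then for every smooth solution `u` of the
generalized seventh-order KdV equation, the conservation law `∂ₜ T₁ + ∂ₓ X₁ = 0` holds
identically, where `T₁ = u` and
`X₁ = u_{6x} + a7 u u_{4x} + (a6 - a7) u_x u_{3x} + ((a5 - a6 + a7)/2) u_{2x}^2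
 + a4 u^2 u_{2x} + (-a4 + (1/2) a3) u u_x^2 + (a1/4) u^4`. -/
theorem conservation_law_T1 (a1 a2 a3 a4 a5 a6 a7 : ℝ)
    (ha2 : a2 = -a4 + (1 / 2) * a3)
    (u : ℝ × ℝ → ℝ) (hu : ContDiff ℝ (⊤ : ℕ∞) u)
    (hsol : ∀ x t : ℝ, kdvE a1 a2 a3 a4 a5 a6 a7 u x t = 0) :
    ∀ x t : ℝ,
      deriv (fun t' => u (x, t')) t
        + deriv (fun x' =>
            dxN 6 u x' t + a7 * u (x', t) * dxN 4 u x' t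
              + (a6 - a7) * dxN 1 u x' t * dxN 3 u x' t
              + ((a5 - a6 + a7) / 2) * (dxN 2 u x' t) ^ 2
              + a4 * (u (x', t)) ^ 2 * dxN 2 u x' t
              + (-a4 + (1 / 2) * a3) * u (x', t) * (dxN 1 u x' t) ^ 2
              + (a1 / 4) * (u (x', t)) ^ 4) x = 0 := by
  intro x t
  have h0 : HasDerivAt (fun x' => u (x', t)) (dxN 1 u x t) x := by
    simpa only [dxN, iteratedDeriv_zero] using hasDerivAt_dxN hu 0 x t
  have h1 := hasDerivAt_dxN hu 1 x t
  have h2 := hasDerivAt_dxN hu 2 x t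
  have h3 := hasDerivAt_dxN hu 3 x t
  have h4 := hasDerivAt_dxN hu 4 x t
  have h6 := hasDerivAt_dxN hu 6 x t
  have hX := (((((h6.fun_add ((h0.const_mul a7).fun_mul h4)).fun_add
    ((h1.const_mul (a6 - a7)).fun_mul h3)).fun_add
    ((h2.fun_pow 2).const_mul ((a5 - a6 + a7) / 2))).fun_add
    (((h0.fun_pow 2).const_mul a4).fun_mul h2)).fun_add
    ((h0.const_mul (-a4 + (1 / 2) * a3)).fun_mul (h1.fun_pow 2))).fun_add
    ((h0.fun_pow 4).const_mul (a1 / 4))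
  rw [hX.deriv]
  have hE := hsol x t
  subst ha2
  unfold kdvE dtU at hE
  rw [← hE]
  norm_num
  ring
end

section
/- Suppose a_2 = −a_4 + (1/2)a_3. Then for every smooth function u : ℝ × ℝ → ℝ (not necessarily a solution), the divergence identity ∂_t u + ∂_x [ u_{6x} + a_7 u u_{4x} + (a_6 − a_7) u_x u_{3x} + ((a_5 − a_6 + a_7)/2) u_{2x}^2 + a_4 u^2 u_{2x} + (−a_4 + (1/2)a_3) u u_x^2 + (a_1/4) u^4 ] = E[u] holds identically in (x,t); that is, Q_1 = 1 is a conservation-law multiplier for the equation. -/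
/-- if `a2 = -a4 + (1/2) a3`, then for every smooth function `u` (not
necessarily a solution), the divergence identity `∂ₜ u + ∂ₓ X₁ = E[u]` holds identically;
that is, `Q₁ = 1` is a conservation-law multiplier for the generalized seventh-order KdV
equation. -/
theorem multiplier_Q1 (a1 a2 a3 a4 a5 a6 a7 : ℝ)
    (ha2 : a2 = -a4 + (1 / 2) * a3)
    (u : ℝ × ℝ → ℝ) (hu : ContDiff ℝ (⊤ : ℕ∞) u) :
    ∀ x t : ℝ,
      deriv (fun t' => u (x, t')) t
        + deriv (fun x' =>
            dxN 6 u x' t + a7 * u (x', t) * dxN 4 u x' t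
              + (a6 - a7) * dxN 1 u x' t * dxN 3 u x' t
              + ((a5 - a6 + a7) / 2) * (dxN 2 u x' t) ^ 2
              + a4 * (u (x', t)) ^ 2 * dxN 2 u x' t
              + (-a4 + (1 / 2) * a3) * u (x', t) * (dxN 1 u x' t) ^ 2
              + (a1 / 4) * (u (x', t)) ^ 4) x
        = kdvE a1 a2 a3 a4 a5 a6 a7 u x t := by
  intro x t
  have h0 : HasDerivAt (fun x' => u (x', t)) (dxN 1 u x t) x := by
    simpa [dxN] using hasDerivAt_dxN hu 0 x t
  have h1 := hasDerivAt_dxN hu 1 x t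
  have h2 := hasDerivAt_dxN hu 2 x t
  have h3 := hasDerivAt_dxN hu 3 x t
  have h4 := hasDerivAt_dxN hu 4 x t
  have h6 := hasDerivAt_dxN hu 6 x t
  have hX := ((((((h6.add ((h0.const_mul a7).mul h4)).add
    ((h1.const_mul (a6 - a7)).mul h3)).add
    ((h2.pow 2).const_mul ((a5 - a6 + a7) / 2))).add
    (((h0.pow 2).const_mul a4).mul h2)).add
    ((h0.const_mul (-a4 + (1 / 2) * a3)).mul (h1.pow 2))).add
    ((h0.pow 4).const_mul (a1 / 4)))
  have hX' := hX.deriv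
  simp only [Pi.add_def, Pi.mul_def, Pi.pow_def] at hX'
  rw [hX']
  subst ha2
  simp only [kdvE, dtU]
  norm_num
  ring
end

section
/- Suppose a_2 = −3a_4 + a_3 and a_5 = 5a_6 − 10a_7. Then for every smooth solution u of E[u] = 0, the conservation law ∂_t T_3 + ∂_x X_3 = 0 holds identically in (x,t), where T_3 = (1/2) u^2 and X_3 = u u_{6x} − u_{5x} u_x + (a_7 u^2 + u_{2x}) u_{4x} − (1/2) u_{3x}^2 + (a_6 − 2a_7) u u_x u_{3x} + (2a_6 − 4a_7) u u_{2x}^2 + ((−a_6 + 2a_7) u_x^2 + a_4 u^3) u_{2x} + ((1/2)a_3 − (3/2)a_4) u^2 u_x^2 + (a_1/5) u^5. -/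
/-- if `a2 = -3 a4 + a3` and `a5 = 5 a6 - 10 a7`, then for every smooth
solution `u` of the generalized seventh-order KdV equation, the conservation law
`∂ₜ T₃ + ∂ₓ X₃ = 0` holds identically, where `T₃ = (1/2) u²` and
`X₃ = u u_{6x} - u_{5x} u_x + (a7 u² + u_{2x}) u_{4x} - (1/2) u_{3x}²
 + (a6 - 2 a7) u u_x u_{3x} + (2 a6 - 4 a7) u u_{2x}²
 + ((-a6 + 2 a7) u_x² + a4 u³) u_{2x} + ((1/2) a3 - (3/2) a4) u² u_x² + (a1/5) u⁵`. -/
theorem conservation_law_T3 (a1 a2 a3 a4 a5 a6 a7 : ℝ)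
    (ha2 : a2 = -3 * a4 + a3) (ha5 : a5 = 5 * a6 - 10 * a7)
    (u : ℝ × ℝ → ℝ) (hu : ContDiff ℝ (⊤ : ℕ∞) u)
    (hsol : ∀ x t : ℝ, kdvE a1 a2 a3 a4 a5 a6 a7 u x t = 0) :
    ∀ x t : ℝ,
      deriv (fun t' => (1 / 2) * (u (x, t')) ^ 2) t
        + deriv (fun x' =>
            u (x', t) * dxN 6 u x' t - dxN 5 u x' t * dxN 1 u x' t
              + (a7 * (u (x', t)) ^ 2 + dxN 2 u x' t) * dxN 4 u x' t
              - (1 / 2) * (dxN 3 u x' t) ^ 2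
              + (a6 - 2 * a7) * u (x', t) * dxN 1 u x' t * dxN 3 u x' t
              + (2 * a6 - 4 * a7) * u (x', t) * (dxN 2 u x' t) ^ 2
              + ((-a6 + 2 * a7) * (dxN 1 u x' t) ^ 2 + a4 * (u (x', t)) ^ 3) * dxN 2 u x' t
              + ((1 / 2) * a3 - (3 / 2) * a4) * (u (x', t)) ^ 2 * (dxN 1 u x' t) ^ 2
              + (a1 / 5) * (u (x', t)) ^ 5) x = 0 := by
  intro x t
  have h0 : HasDerivAt (fun x' => u (x', t)) (dxN 1 u x t) x := by
    simpa [dxN] using hasDerivAt_dxN hu 0 x t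
  have h1 := hasDerivAt_dxN hu 1 x t
  have h2 := hasDerivAt_dxN hu 2 x t
  have h3 := hasDerivAt_dxN hu 3 x t
  have h4 := hasDerivAt_dxN hu 4 x t
  have h5 := hasDerivAt_dxN hu 5 x t
  have h6 := hasDerivAt_dxN hu 6 x t
  have ht : HasDerivAt (fun t' => u (x, t')) (dtU u x t) t := by
    have hslice : ContDiff ℝ (⊤ : ℕ∞) (fun t' => u (x, t')) :=
      hu.comp (contDiff_const.prodMk contDiff_id)
    exact (hslice.differentiable (by simp) t).hasDerivAt
  have hT := (ht.fun_pow 2).const_mul (1 / 2 : ℝ)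
  -- The flux derivative, assembled summand by summand in the order in which the flux is written.
  have hX := (((((((((h0.fun_mul h6).fun_sub (h5.fun_mul h1)).fun_add
      ((((h0.fun_pow 2).const_mul a7).fun_add h2).fun_mul h4)).fun_sub
      ((h3.fun_pow 2).const_mul (1 / 2 : ℝ))).fun_add
      (((h0.const_mul (a6 - 2 * a7)).fun_mul h1).fun_mul h3)).fun_add
      ((h0.const_mul (2 * a6 - 4 * a7)).fun_mul (h2.fun_pow 2))).fun_add
      ((((h1.fun_pow 2).const_mul (-a6 + 2 * a7)).fun_add
        ((h0.fun_pow 3).const_mul a4)).fun_mul h2)).fun_add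
      (((h0.fun_pow 2).const_mul ((1 / 2) * a3 - (3 / 2) * a4)).fun_mul (h1.fun_pow 2))).fun_add
      ((h0.fun_pow 5).const_mul (a1 / 5)))
  rw [hT.deriv, hX.deriv]
  have hE := hsol x t
  unfold kdvE at hE
  subst ha2 ha5
  push_cast
  linear_combination u (x, t) * hE
end

section
/- Suppose a_7 ≠ 0, a_1 = 5a_7^3/98, a_2 = 5a_7^2/14, a_3 = 10a_7^2/7, a_4 = 5a_7^2/14, a_5 = 5a_7, and a_6 = 3a_7. Then T_7 = −(1/2)a_7 t u_{2x}^2 + (5a_7^2/14) t u u_x^2 − (5a_7^3/392) t u^4 + x u is a conserved density for the generalized seventh-order KdV equation: there exists a smooth function F : ℝ × ℝ × ℝ^{13} → ℝ such that for every smooth solution u of E[u] = 0, ∂_t [T_7] + ∂_x [F(t, x, u, u_x, …, u_{12x})] = 0 identically in (x,t). -/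
/-! ### The flux polynomials in the jet variables -/

/-- The polynomial `P` with `D_x P = K`, where `u_t = -K` is the equation; `q n` stands for
`u_{nx}` and `a` for `a7`. -/
noncomputable def fluxP (a : ℝ) (q : ℕ → ℝ) : ℝ :=
  q 6 + a * q 0 * q 4 + 2 * a * q 1 * q 3 + 3 / 2 * a * q 2 ^ 2
    + 5 / 14 * a ^ 2 * q 0 ^ 2 * q 2 + 5 / 14 * a ^ 2 * q 0 * q 1 ^ 2
    + 5 / 392 * a ^ 3 * q 0 ^ 4

/-- The part of the flux of `T₇` that multiplies `t`. -/
noncomputable def fluxQ (a : ℝ) (q : ℕ → ℝ) : ℝ :=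
  -(a * q 2 * q 8) + a * q 3 * q 7 + 5 / 7 * a ^ 2 * q 0 * q 1 * q 7 - a * q 4 * q 6
    - 12 / 7 * a ^ 2 * q 0 * q 2 * q 6 - 5 / 14 * a ^ 2 * q 1 ^ 2 * q 6
    - 5 / 98 * a ^ 3 * q 0 ^ 3 * q 6 + 1 / 2 * a * q 5 ^ 2
    + 12 / 7 * a ^ 2 * q 0 * q 3 * q 5 - 18 / 7 * a ^ 2 * q 1 * q 2 * q 5
    + 85 / 98 * a ^ 3 * q 0 ^ 2 * q 1 * q 5 - 6 / 7 * a ^ 2 * q 0 * q 4 ^ 2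
    + 6 / 7 * a ^ 2 * q 1 * q 3 * q 4 - 66 / 7 * a ^ 2 * q 2 ^ 2 * q 4
    - 60 / 49 * a ^ 3 * q 0 ^ 2 * q 2 * q 4 + 145 / 98 * a ^ 3 * q 0 * q 1 ^ 2 * q 4
    - 5 / 98 * a ^ 4 * q 0 ^ 4 * q 4 + 30 / 49 * a ^ 3 * q 0 ^ 2 * q 3 ^ 2
    + 115 / 49 * a ^ 3 * q 0 * q 1 * q 2 * q 3 - 20 / 49 * a ^ 3 * q 1 ^ 3 * q 3
    + 15 / 49 * a ^ 4 * q 0 ^ 3 * q 1 * q 3 - 120 / 49 * a ^ 3 * q 0 * q 2 ^ 3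
    - 195 / 98 * a ^ 3 * q 1 ^ 2 * q 2 ^ 2 - 15 / 49 * a ^ 4 * q 0 ^ 3 * q 2 ^ 2
    + 145 / 196 * a ^ 4 * q 0 ^ 2 * q 1 ^ 2 * q 2
    - 25 / 1372 * a ^ 5 * q 0 ^ 5 * q 2 + 25 / 196 * a ^ 4 * q 0 * q 1 ^ 4
    + 75 / 2744 * a ^ 5 * q 0 ^ 4 * q 1 ^ 2 - 25 / 67228 * a ^ 6 * q 0 ^ 7

/-- The part of the flux of `T₇` free of explicit `t` and `x`. -/
noncomputable def fluxR (a : ℝ) (q : ℕ → ℝ) : ℝ :=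
  -(q 5) - a * q 0 * q 3 - a * q 1 * q 2 - 5 / 14 * a ^ 2 * q 0 ^ 2 * q 1

/-- The `u_t`-free part `K` of the equation, with the coefficients expressed through `a = a7`. -/
noncomputable def jetK (a : ℝ) (q : ℕ → ℝ) : ℝ :=
  5 * a ^ 3 / 98 * q 0 ^ 3 * q 1 + 5 * a ^ 2 / 14 * q 1 ^ 3
    + 10 * a ^ 2 / 7 * q 0 * q 1 * q 2 + 5 * a ^ 2 / 14 * q 0 ^ 2 * q 3
    + 5 * a * q 2 * q 3 + 3 * a * q 1 * q 4 + a * q 0 * q 5 + q 7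

/-- The total derivative `D_x K`. -/
noncomputable def jetDK (a : ℝ) (q : ℕ → ℝ) : ℝ :=
  5 * a ^ 3 / 98 * (3 * q 0 ^ 2 * q 1 ^ 2 + q 0 ^ 3 * q 2)
    + 5 * a ^ 2 / 14 * (3 * q 1 ^ 2 * q 2)
    + 10 * a ^ 2 / 7 * (q 1 ^ 2 * q 2 + q 0 * q 2 ^ 2 + q 0 * q 1 * q 3)
    + 5 * a ^ 2 / 14 * (2 * q 0 * q 1 * q 3 + q 0 ^ 2 * q 4)
    + 5 * a * (q 3 ^ 2 + q 2 * q 4) + 3 * a * (q 2 * q 4 + q 1 * q 5)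
    + a * (q 1 * q 5 + q 0 * q 6) + q 8

/-- The second total derivative `D_x² K`. -/
noncomputable def jetDDK (a : ℝ) (q : ℕ → ℝ) : ℝ :=
  5 * a ^ 3 / 98 * (6 * q 0 * q 1 ^ 3 + 9 * q 0 ^ 2 * q 1 * q 2 + q 0 ^ 3 * q 3)
    + 5 * a ^ 2 / 14 * (6 * q 1 * q 2 ^ 2 + 3 * q 1 ^ 2 * q 3)
    + 10 * a ^ 2 / 7 * (3 * q 1 * q 2 ^ 2 + 2 * q 1 ^ 2 * q 3 + 3 * q 0 * q 2 * q 3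
      + q 0 * q 1 * q 4)
    + 5 * a ^ 2 / 14 * (2 * q 1 ^ 2 * q 3 + 2 * q 0 * q 2 * q 3 + 4 * q 0 * q 1 * q 4
      + q 0 ^ 2 * q 5)
    + 5 * a * (3 * q 3 * q 4 + q 2 * q 5) + 3 * a * (q 3 * q 4 + 2 * q 2 * q 5 + q 1 * q 6)
    + a * (q 2 * q 5 + 2 * q 1 * q 6 + q 0 * q 7) + q 9

/-! ### Total derivatives along a jet curve -/

lemma hasDerivAt_K (a : ℝ) (q : ℕ → ℝ → ℝ) (x : ℝ)
    (h : ∀ n, HasDerivAt (q n) (q (n + 1) x) x) :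
    HasDerivAt (fun y => jetK a (fun n => q n y)) (jetDK a (fun n => q n x)) x := by
  unfold jetK jetDK
  beta_reduce
  apply HasDerivAt.congr_deriv
  · repeat' first
      | exact hasDerivAt_const _ _
      | exact h _
      | with_reducible apply HasDerivAt.fun_add
      | with_reducible apply HasDerivAt.fun_mul
      | with_reducible apply HasDerivAt.fun_pow
  · push_cast
    ring

lemma hasDerivAt_DK (a : ℝ) (q : ℕ → ℝ → ℝ) (x : ℝ)
    (h : ∀ n, HasDerivAt (q n) (q (n + 1) x) x) :
    HasDerivAt (fun y => jetDK a (fun n => q n y)) (jetDDK a (fun n => q n x)) x := by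
  unfold jetDK jetDDK
  beta_reduce
  apply HasDerivAt.congr_deriv
  · repeat' first
      | exact hasDerivAt_const _ _
      | exact h _
      | with_reducible apply HasDerivAt.fun_add
      | with_reducible apply HasDerivAt.fun_mul
      | with_reducible apply HasDerivAt.fun_pow
  · push_cast
    ring

/-- The total `x`-derivative of the flux, written so that it visibly cancels `∂ₜ T₇` once
`u_t, u_tx, u_txx` are replaced by `-K, -D_x K, -D_x² K`. -/
lemma hasDerivAt_flux (a t : ℝ) (q : ℕ → ℝ → ℝ) (x : ℝ)
    (h : ∀ n, HasDerivAt (q n) (q (n + 1) x) x) :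
    HasDerivAt (fun y => t * fluxQ a (fun n => q n y) + y * fluxP a (fun n => q n y)
        + fluxR a (fun n => q n y))
      (1 / 2 * a * q 2 x ^ 2 - 5 * a ^ 2 / 14 * q 0 x * q 1 x ^ 2 + 5 * a ^ 3 / 392 * q 0 x ^ 4
        - t * (a * q 2 x * jetDDK a (fun n => q n x)
          - 5 * a ^ 2 / 14 * (q 1 x ^ 2 * jetK a (fun n => q n x)
            + 2 * q 0 x * q 1 x * jetDK a (fun n => q n x))
          + 5 * a ^ 3 / 98 * q 0 x ^ 3 * jetK a (fun n => q n x))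
        + x * jetK a (fun n => q n x)) x := by
  unfold jetK jetDK jetDDK fluxQ fluxP fluxR
  beta_reduce
  apply HasDerivAt.congr_deriv
  · repeat' first
      | exact hasDerivAt_const _ _
      | exact h _
      | exact hasDerivAt_id' _
      | with_reducible apply HasDerivAt.fun_add
      | with_reducible apply HasDerivAt.fun_sub
      | with_reducible apply HasDerivAt.fun_neg
      | with_reducible apply HasDerivAt.fun_mul
      | with_reducible apply HasDerivAt.fun_pow
  · push_cast
    ring

/-! ### Partial derivatives of smooth functions of two variables -/

/-- The partial derivative in the first variable, as a directional derivative. -/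
noncomputable def px (f : ℝ × ℝ → ℝ) (p : ℝ × ℝ) : ℝ := fderiv ℝ f p (1, 0)

/-- The partial derivative in the second variable, as a directional derivative. -/
noncomputable def pt (f : ℝ × ℝ → ℝ) (p : ℝ × ℝ) : ℝ := fderiv ℝ f p (0, 1)

lemma contDiff_px {f : ℝ × ℝ → ℝ} (hf : ContDiff ℝ (⊤ : ℕ∞) f) :
    ContDiff ℝ (⊤ : ℕ∞) (px f) :=
  (hf.fderiv_right (m := ((⊤ : ℕ∞) : WithTop ℕ∞)) (by simp)).clm_apply contDiff_const

lemma contDiff_pt {f : ℝ × ℝ → ℝ} (hf : ContDiff ℝ (⊤ : ℕ∞) f) :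
    ContDiff ℝ (⊤ : ℕ∞) (pt f) :=
  (hf.fderiv_right (m := ((⊤ : ℕ∞) : WithTop ℕ∞)) (by simp)).clm_apply contDiff_const

lemma contDiff_px_iter {f : ℝ × ℝ → ℝ} (hf : ContDiff ℝ (⊤ : ℕ∞) f) (n : ℕ) :
    ContDiff ℝ (⊤ : ℕ∞) (px^[n] f) := by
  induction n with
  | zero => exact hf
  | succ n ih =>
    rw [Function.iterate_succ_apply']
    exact contDiff_px ih

lemma hasDerivAt_x {f : ℝ × ℝ → ℝ} (hf : ContDiff ℝ (⊤ : ℕ∞) f) (x t : ℝ) :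
    HasDerivAt (fun y => f (y, t)) (px f (x, t)) x := by
  have h := ((hf.differentiable (by simp)) (x, t)).hasFDerivAt
  exact h.comp_hasDerivAt x ((hasDerivAt_id' x).prodMk (hasDerivAt_const x t))

lemma hasDerivAt_t {f : ℝ × ℝ → ℝ} (hf : ContDiff ℝ (⊤ : ℕ∞) f) (x t : ℝ) :
    HasDerivAt (fun s => f (x, s)) (pt f (x, t)) t := by
  have h := ((hf.differentiable (by simp)) (x, t)).hasFDerivAt
  exact h.comp_hasDerivAt t ((hasDerivAt_const t x).prodMk (hasDerivAt_id' t))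

lemma pt_px_comm {f : ℝ × ℝ → ℝ} (hf : ContDiff ℝ (⊤ : ℕ∞) f) : pt (px f) = px (pt f) := by
  funext p
  have hd : DifferentiableAt ℝ (fderiv ℝ f) p :=
    (hf.fderiv_right (m := ((⊤ : ℕ∞) : WithTop ℕ∞)) (by simp)).differentiable (by simp) p
  have hs : IsSymmSndFDerivAt ℝ f p :=
    hf.contDiffAt.isSymmSndFDerivAt
      (by simpa using WithTop.coe_le_coe.2 (le_top : (2 : ℕ∞) ≤ ⊤))
  have key : ∀ v w : ℝ × ℝ, fderiv ℝ (fun p' => fderiv ℝ f p' v) p w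
      = fderiv ℝ (fderiv ℝ f) p w v := by
    intro v w
    rw [fderiv_clm_apply hd (differentiableAt_const v)]
    simp
  unfold pt px
  rw [key, key]
  exact hs _ _

lemma dxN_eq {u : ℝ × ℝ → ℝ} (hu : ContDiff ℝ (⊤ : ℕ∞) u) (n : ℕ) (x t : ℝ) :
    dxN n u x t = px^[n] u (x, t) := by
  induction n generalizing x with
  | zero => simp [dxN]
  | succ n ih =>
    have h : iteratedDeriv n (fun x' => u (x', t)) = fun y => px^[n] u (y, t) := funext ih
    rw [dxN, iteratedDeriv_succ, h, Function.iterate_succ_apply']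
    exact (hasDerivAt_x (contDiff_px_iter hu n) x t).deriv

/-- if `a7 ≠ 0`, `a1 = 5 a7³/98`, `a2 = 5 a7²/14`, `a3 = 10 a7²/7`,
`a4 = 5 a7²/14`, `a5 = 5 a7` and `a6 = 3 a7`, then
`T₇ = -(1/2) a7 t u_{2x}² + (5 a7²/14) t u u_x² - (5 a7³/392) t u⁴ + x u`
is a conserved density: there is a smooth flux `F : ℝ × ℝ × ℝ¹³ → ℝ`, evaluated at
`(t, x, u, u_x, …, u_{12x})`, such that `∂ₜ T₇ + ∂ₓ F = 0` for every smooth solution `u`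
of the generalized seventh-order KdV equation. -/
theorem conserved_density_T7 (a1 a2 a3 a4 a5 a6 a7 : ℝ) (ha7 : a7 ≠ 0)
    (ha1 : a1 = 5 * a7 ^ 3 / 98) (ha2 : a2 = 5 * a7 ^ 2 / 14)
    (ha3 : a3 = 10 * a7 ^ 2 / 7) (ha4 : a4 = 5 * a7 ^ 2 / 14)
    (ha5 : a5 = 5 * a7) (ha6 : a6 = 3 * a7) :
    ∃ F : ℝ × ℝ × (Fin 13 → ℝ) → ℝ, ContDiff ℝ (⊤ : ℕ∞) F ∧
      ∀ u : ℝ × ℝ → ℝ, ContDiff ℝ (⊤ : ℕ∞) u →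
        (∀ x t : ℝ, kdvE a1 a2 a3 a4 a5 a6 a7 u x t = 0) →
        ∀ x t : ℝ,
          deriv (fun t' =>
              -(1 / 2) * a7 * t' * (dxN 2 u x t') ^ 2
                + (5 * a7 ^ 2 / 14) * t' * u (x, t') * (dxN 1 u x t') ^ 2
                - (5 * a7 ^ 3 / 392) * t' * (u (x, t')) ^ 4
                + x * u (x, t')) t
            + deriv (fun x' => F (t, x', fun i : Fin 13 => dxN i.1 u x' t)) x = 0 := by
  refine ⟨fun p => p.1 * fluxQ a7 (fun n => p.2.2 (Fin.ofNat 13 n))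
      + p.2.1 * fluxP a7 (fun n => p.2.2 (Fin.ofNat 13 n))
      + fluxR a7 (fun n => p.2.2 (Fin.ofNat 13 n)), ?_, ?_⟩
  · unfold fluxP fluxQ fluxR
    fun_prop
  intro u hu hE x t
  subst ha1 ha2 ha3 ha4 ha5 ha6
  have hU := contDiff_px_iter hu
  have hx : ∀ n y s, HasDerivAt (fun y => px^[n] u (y, s)) (px^[n + 1] u (y, s)) y := by
    intro n y s
    rw [Function.iterate_succ_apply']
    exact hasDerivAt_x (hU n) y s
  -- The equation and its first two `x`-derivatives express `u_t`, `u_tx`, `u_txx` by jets in `x`.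
  have hw : pt u = fun p => -jetK a7 (fun n => px^[n] u p) := by
    funext ⟨y, s⟩
    have h := hE y s
    have hdt : dtU u y s = pt u (y, s) := (hasDerivAt_t hu y s).deriv
    simp only [kdvE, hdt, dxN_eq hu] at h
    simp only [jetK, Function.iterate_zero, id]
    linarith
  have hw1 : pt (px u) = fun p => -jetDK a7 (fun n => px^[n] u p) := by
    rw [pt_px_comm hu]
    funext ⟨y, s⟩
    have h := hasDerivAt_x (contDiff_pt hu) y s
    rw [hw] at h ⊢
    exact h.unique (hasDerivAt_K a7 (fun n y => px^[n] u (y, s)) y (fun n => hx n y s)).neg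
  have hw2 : pt (px (px u)) = fun p => -jetDDK a7 (fun n => px^[n] u p) := by
    rw [pt_px_comm (contDiff_px hu)]
    funext ⟨y, s⟩
    have h := hasDerivAt_x (contDiff_pt (contDiff_px hu)) y s
    rw [hw1] at h ⊢
    exact h.unique (hasDerivAt_DK a7 (fun n y => px^[n] u (y, s)) y (fun n => hx n y s)).neg
  have hflux := (hasDerivAt_flux a7 t (fun n y => px^[n] u (y, t)) x (fun n => hx n x t)).deriv
  have e0 := hasDerivAt_t hu x t
  have e1 := hasDerivAt_t (contDiff_px hu) x t
  have e2 := hasDerivAt_t (contDiff_px (contDiff_px hu)) x t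
  have hT := (((((hasDerivAt_id' t).const_mul (-(1 / 2) * a7)).fun_mul (e2.fun_pow 2)).fun_add
    ((((hasDerivAt_id' t).const_mul (5 * a7 ^ 2 / 14)).fun_mul e0).fun_mul
      (e1.fun_pow 2))).fun_sub
    (((hasDerivAt_id' t).const_mul (5 * a7 ^ 3 / 392)).fun_mul (e0.fun_pow 4))).fun_add
    (e0.const_mul x)
  have hT' := hT.deriv
  rw [hw, hw1, hw2] at hT'
  simp only [dxN_eq hu]
  -- `fluxP`, `fluxQ`, `fluxR` read only entries `n < 13`, where `Fin.ofNat 13 n` has value `n`.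
  have hF : (fun x' => t * fluxQ a7 (fun n => px^[(Fin.ofNat 13 n).1] u (x', t))
      + x' * fluxP a7 (fun n => px^[(Fin.ofNat 13 n).1] u (x', t))
      + fluxR a7 (fun n => px^[(Fin.ofNat 13 n).1] u (x', t)))
      = fun x' => t * fluxQ a7 (fun n => px^[n] u (x', t))
      + x' * fluxP a7 (fun n => px^[n] u (x', t))
      + fluxR a7 (fun n => px^[n] u (x', t)) := by
    rfl
  rw [hF, hflux]
  refine (congrArg (· + _) hT').trans ?_
  simp only [Function.iterate_succ, Function.iterate_zero, Function.comp, id]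
  push_cast
  ring
end

section
/- Suppose a_2 = −a_4 + (1/2)a_3 and let λ ∈ ℝ. Then for every smooth function h : ℝ → ℝ, the identity d/dz [ h^{(6)} + a_7 h h^{(4)} + (a_6 − a_7) h' h''' + ((a_5 − a_6 + a_7)/2) (h'')^2 + a_4 h^2 h'' + ((1/2)a_3 − a_4) h (h')^2 + (a_1/4) h^4 − λ h ] = h^{(7)} + a_7 h h^{(5)} + a_6 h' h^{(4)} + a_5 h'' h''' + a_4 h^2 h''' + a_3 h h' h'' + a_2 (h')^3 + a_1 h^3 h' − λ h' holds identically on ℝ. Consequently, Q = 1 is an integrating factor of the travelling wave ODE, and the bracketed expression is a first integral: it is constant along every solution h of the ODE. -/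
/-! Differentiating the bracketed expression with the product and chain rules, where the derivative
of `h⁽ⁿ⁾` is `h⁽ⁿ⁺¹⁾`, gives the left-hand side of the ODE except that the coefficient of `(h')³` is
`a3 / 2 - a4`; the hypothesis says precisely that this equals `a2`. The result is recorded as a
`HasDerivAt` statement (`hasDerivAt_bracket`), so differentiability is available when concluding that
an everywhere vanishing derivative forces the bracket to be constant. -/

/-- Left-hand side of the travelling wave ODE associated with the generalized
seventh-order KdV equation (wave speed `lam`):
`h⁽⁷⁾ + a7 h h⁽⁵⁾ + a6 h' h⁽⁴⁾ + a5 h'' h''' + a4 h² h''' + a3 h h' h''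
 + a2 (h')³ + a1 h³ h' - lam h'`. -/
noncomputable def odeLHS (a1 a2 a3 a4 a5 a6 a7 lam : ℝ) (h : ℝ → ℝ) (z : ℝ) : ℝ :=
  iteratedDeriv 7 h z
    + a7 * h z * iteratedDeriv 5 h z
    + a6 * deriv h z * iteratedDeriv 4 h z
    + a5 * iteratedDeriv 2 h z * iteratedDeriv 3 h z
    + a4 * (h z) ^ 2 * iteratedDeriv 3 h z
    + a3 * h z * deriv h z * iteratedDeriv 2 h z
    + a2 * (deriv h z) ^ 3
    + a1 * (h z) ^ 3 * deriv h z
    - lam * deriv h z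

theorem hasDerivAt_iteratedDeriv_of_smooth {h : ℝ → ℝ} (hh : ContDiff ℝ (⊤ : ℕ∞) h)
    (n : ℕ) (z : ℝ) : HasDerivAt (iteratedDeriv n h) (iteratedDeriv (n + 1) h z) z := by
  rw [iteratedDeriv_succ]
  exact (hh.differentiable_iteratedDeriv n (by exact_mod_cast WithTop.coe_lt_top n) z).hasDerivAt

theorem hasDerivAt_bracket (a1 a2 a3 a4 a5 a6 a7 lam : ℝ)
    (ha2 : a2 = -a4 + (1 / 2) * a3) {h : ℝ → ℝ} (hh : ContDiff ℝ (⊤ : ℕ∞) h) (z : ℝ) :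
    HasDerivAt (fun z' =>
          iteratedDeriv 6 h z' + a7 * h z' * iteratedDeriv 4 h z'
            + (a6 - a7) * deriv h z' * iteratedDeriv 3 h z'
            + ((a5 - a6 + a7) / 2) * (iteratedDeriv 2 h z') ^ 2
            + a4 * (h z') ^ 2 * iteratedDeriv 2 h z'
            + ((1 / 2) * a3 - a4) * h z' * (deriv h z') ^ 2
            + (a1 / 4) * (h z') ^ 4 - lam * h z')
      (odeLHS a1 a2 a3 a4 a5 a6 a7 lam h z) z := by
  have H := hasDerivAt_iteratedDeriv_of_smooth hh
  have h0 : HasDerivAt h (deriv h z) z := by simpa using H 0 z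
  have h1 : HasDerivAt (deriv h) (iteratedDeriv 2 h z) z := by simpa using H 1 z
  have h2 := H 2 z
  have h3 := H 3 z
  have h4 := H 4 z
  have h6 := H 6 z
  have key := (((((((h6.fun_add ((h0.const_mul a7).fun_mul h4)).fun_add
    ((h1.const_mul (a6 - a7)).fun_mul h3)).fun_add
    ((h2.fun_pow 2).const_mul ((a5 - a6 + a7) / 2))).fun_add
    (((h0.fun_pow 2).const_mul a4).fun_mul h2)).fun_add
    ((h0.const_mul ((1 / 2) * a3 - a4)).fun_mul (h1.fun_pow 2))).fun_add
    ((h0.fun_pow 4).const_mul (a1 / 4))).fun_sub (h0.const_mul lam))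
  refine key.congr_deriv ?_
  subst ha2
  simp only [odeLHS]
  push_cast
  ring

/-- if `a2 = -a4 + (1/2) a3`, then for every smooth `h : ℝ → ℝ`,
`d/dz [h⁽⁶⁾ + a7 h h⁽⁴⁾ + (a6 - a7) h' h''' + ((a5 - a6 + a7)/2)(h'')² + a4 h² h''
 + ((1/2) a3 - a4) h (h')² + (a1/4) h⁴ - lam h]` equals the left-hand side of the
travelling wave ODE; consequently `Q = 1` is an integrating factor and the bracketed
expression is a first integral, constant along every solution of the ODE. -/
theorem integrating_factor_one (a1 a2 a3 a4 a5 a6 a7 lam : ℝ)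
    (ha2 : a2 = -a4 + (1 / 2) * a3) :
    (∀ h : ℝ → ℝ, ContDiff ℝ (⊤ : ℕ∞) h → ∀ z : ℝ,
      deriv (fun z' =>
          iteratedDeriv 6 h z' + a7 * h z' * iteratedDeriv 4 h z'
            + (a6 - a7) * deriv h z' * iteratedDeriv 3 h z'
            + ((a5 - a6 + a7) / 2) * (iteratedDeriv 2 h z') ^ 2
            + a4 * (h z') ^ 2 * iteratedDeriv 2 h z'
            + ((1 / 2) * a3 - a4) * h z' * (deriv h z') ^ 2
            + (a1 / 4) * (h z') ^ 4 - lam * h z') z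
        = odeLHS a1 a2 a3 a4 a5 a6 a7 lam h z) ∧
    (∀ h : ℝ → ℝ, ContDiff ℝ (⊤ : ℕ∞) h →
      (∀ z : ℝ, odeLHS a1 a2 a3 a4 a5 a6 a7 lam h z = 0) →
      ∀ z₁ z₂ : ℝ,
        (iteratedDeriv 6 h z₁ + a7 * h z₁ * iteratedDeriv 4 h z₁
            + (a6 - a7) * deriv h z₁ * iteratedDeriv 3 h z₁
            + ((a5 - a6 + a7) / 2) * (iteratedDeriv 2 h z₁) ^ 2
            + a4 * (h z₁) ^ 2 * iteratedDeriv 2 h z₁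
            + ((1 / 2) * a3 - a4) * h z₁ * (deriv h z₁) ^ 2
            + (a1 / 4) * (h z₁) ^ 4 - lam * h z₁)
        = (iteratedDeriv 6 h z₂ + a7 * h z₂ * iteratedDeriv 4 h z₂
            + (a6 - a7) * deriv h z₂ * iteratedDeriv 3 h z₂
            + ((a5 - a6 + a7) / 2) * (iteratedDeriv 2 h z₂) ^ 2
            + a4 * (h z₂) ^ 2 * iteratedDeriv 2 h z₂
            + ((1 / 2) * a3 - a4) * h z₂ * (deriv h z₂) ^ 2
            + (a1 / 4) * (h z₂) ^ 4 - lam * h z₂)) := by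
  refine ⟨fun h hh z => (hasDerivAt_bracket a1 a2 a3 a4 a5 a6 a7 lam ha2 hh z).deriv, ?_⟩
  intro h hh hode z₁ z₂
  have H := hasDerivAt_bracket a1 a2 a3 a4 a5 a6 a7 lam ha2 hh
  exact is_const_of_deriv_eq_zero (fun z => (H z).differentiableAt)
    (fun z => (H z).deriv.trans (hode z)) z₁ z₂
end

section
/- Suppose a_2 = a_3 − 3a_4 and a_5 = 5a_6 − 10a_7, and let λ ∈ ℝ. Then for every smooth function h : ℝ → ℝ, the identity d/dz [ h h^{(6)} − h^{(5)} h' + (a_7 h^2 + h'') h^{(4)} − (1/2)(h''')^2 + (a_6 − 2a_7) h h' h''' + (2a_6 − 4a_7) h (h'')^2 + ((−a_6 + 2a_7)(h')^2 + a_4 h^3) h'' + ((1/2)a_3 − (3/2)a_4) h^2 (h')^2 + (a_1/5) h^5 − (λ/2) h^2 ] = h · ( h^{(7)} + a_7 h h^{(5)} + a_6 h' h^{(4)} + a_5 h'' h''' + a_4 h^2 h''' + a_3 h h' h'' + a_2 (h')^3 + a_1 h^3 h' − λ h' ) holds identically on ℝ. Consequently, Q = h is an integrating factor of the travelling wave ODE,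 and the bracketed expression is constant along every solution h of the ODE. -/
/-- if `a2 = a3 - 3 a4` and `a5 = 5 a6 - 10 a7`, then for every smooth
`h : ℝ → ℝ`, `d/dz [h h⁽⁶⁾ - h⁽⁵⁾ h' + (a7 h² + h'') h⁽⁴⁾ - (1/2)(h''')²
 + (a6 - 2 a7) h h' h''' + (2 a6 - 4 a7) h (h'')² + ((-a6 + 2 a7)(h')² + a4 h³) h''
 + ((1/2) a3 - (3/2) a4) h² (h')² + (a1/5) h⁵ - (lam/2) h²]` equals `h` times the
left-hand side of the travelling wave ODE; consequently `Q = h` is an integrating factor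
and the bracketed expression is constant along every solution of the ODE. -/
theorem integrating_factor_h (a1 a2 a3 a4 a5 a6 a7 lam : ℝ)
    (ha2 : a2 = a3 - 3 * a4) (ha5 : a5 = 5 * a6 - 10 * a7) :
    (∀ h : ℝ → ℝ, ContDiff ℝ (⊤ : ℕ∞) h → ∀ z : ℝ,
      deriv (fun z' =>
          h z' * iteratedDeriv 6 h z' - iteratedDeriv 5 h z' * deriv h z'
            + (a7 * (h z') ^ 2 + iteratedDeriv 2 h z') * iteratedDeriv 4 h z'
            - (1 / 2) * (iteratedDeriv 3 h z') ^ 2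
            + (a6 - 2 * a7) * h z' * deriv h z' * iteratedDeriv 3 h z'
            + (2 * a6 - 4 * a7) * h z' * (iteratedDeriv 2 h z') ^ 2
            + ((-a6 + 2 * a7) * (deriv h z') ^ 2 + a4 * (h z') ^ 3) * iteratedDeriv 2 h z'
            + ((1 / 2) * a3 - (3 / 2) * a4) * (h z') ^ 2 * (deriv h z') ^ 2
            + (a1 / 5) * (h z') ^ 5 - (lam / 2) * (h z') ^ 2) z
        = h z * odeLHS a1 a2 a3 a4 a5 a6 a7 lam h z) ∧
    (∀ h : ℝ → ℝ, ContDiff ℝ (⊤ : ℕ∞) h →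
      (∀ z : ℝ, odeLHS a1 a2 a3 a4 a5 a6 a7 lam h z = 0) →
      ∀ z₁ z₂ : ℝ,
        (h z₁ * iteratedDeriv 6 h z₁ - iteratedDeriv 5 h z₁ * deriv h z₁
            + (a7 * (h z₁) ^ 2 + iteratedDeriv 2 h z₁) * iteratedDeriv 4 h z₁
            - (1 / 2) * (iteratedDeriv 3 h z₁) ^ 2
            + (a6 - 2 * a7) * h z₁ * deriv h z₁ * iteratedDeriv 3 h z₁
            + (2 * a6 - 4 * a7) * h z₁ * (iteratedDeriv 2 h z₁) ^ 2
            + ((-a6 + 2 * a7) * (deriv h z₁) ^ 2 + a4 * (h z₁) ^ 3) * iteratedDeriv 2 h z₁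
            + ((1 / 2) * a3 - (3 / 2) * a4) * (h z₁) ^ 2 * (deriv h z₁) ^ 2
            + (a1 / 5) * (h z₁) ^ 5 - (lam / 2) * (h z₁) ^ 2)
        = (h z₂ * iteratedDeriv 6 h z₂ - iteratedDeriv 5 h z₂ * deriv h z₂
            + (a7 * (h z₂) ^ 2 + iteratedDeriv 2 h z₂) * iteratedDeriv 4 h z₂
            - (1 / 2) * (iteratedDeriv 3 h z₂) ^ 2
            + (a6 - 2 * a7) * h z₂ * deriv h z₂ * iteratedDeriv 3 h z₂
            + (2 * a6 - 4 * a7) * h z₂ * (iteratedDeriv 2 h z₂) ^ 2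
            + ((-a6 + 2 * a7) * (deriv h z₂) ^ 2 + a4 * (h z₂) ^ 3) * iteratedDeriv 2 h z₂
            + ((1 / 2) * a3 - (3 / 2) * a4) * (h z₂) ^ 2 * (deriv h z₂) ^ 2
            + (a1 / 5) * (h z₂) ^ 5 - (lam / 2) * (h z₂) ^ 2)) := by
  -- `HasDerivAt` carries both differentiability (for constancy) and the value of the derivative.
  have key : ∀ h : ℝ → ℝ, ContDiff ℝ (⊤ : ℕ∞) h → ∀ z : ℝ,
      HasDerivAt (fun z' =>
          h z' * iteratedDeriv 6 h z' - iteratedDeriv 5 h z' * deriv h z'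
            + (a7 * (h z') ^ 2 + iteratedDeriv 2 h z') * iteratedDeriv 4 h z'
            - (1 / 2) * (iteratedDeriv 3 h z') ^ 2
            + (a6 - 2 * a7) * h z' * deriv h z' * iteratedDeriv 3 h z'
            + (2 * a6 - 4 * a7) * h z' * (iteratedDeriv 2 h z') ^ 2
            + ((-a6 + 2 * a7) * (deriv h z') ^ 2 + a4 * (h z') ^ 3) * iteratedDeriv 2 h z'
            + ((1 / 2) * a3 - (3 / 2) * a4) * (h z') ^ 2 * (deriv h z') ^ 2
            + (a1 / 5) * (h z') ^ 5 - (lam / 2) * (h z') ^ 2)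
        (h z * odeLHS a1 a2 a3 a4 a5 a6 a7 lam h z) z := by
    intro h hh z
    have d := fun n => hasDerivAt_iteratedDeriv_of_smooth hh n z
    have d0 : HasDerivAt h (deriv h z) z := by simpa using d 0
    have d1 : HasDerivAt (deriv h) (iteratedDeriv 2 h z) z := by
      simpa only [iteratedDeriv_one] using d 1
    have d2 := d 2
    have d3 := d 3
    have d4 := d 4
    have d5 := d 5
    have d6 := d 6
    have D := (((((((((d0.mul d6).sub (d5.mul d1)).add
      ((((d0.pow 2).const_mul a7).add d2).mul d4)).sub
      ((d3.pow 2).const_mul (1 / 2))).add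
      (((d0.const_mul (a6 - 2 * a7)).mul d1).mul d3)).add
      ((d0.const_mul (2 * a6 - 4 * a7)).mul (d2.pow 2))).add
      ((((d1.pow 2).const_mul (-a6 + 2 * a7)).add ((d0.pow 3).const_mul a4)).mul d2)).add
      (((d0.pow 2).const_mul ((1 / 2) * a3 - (3 / 2) * a4)).mul (d1.pow 2))).add
      ((d0.pow 5).const_mul (a1 / 5))).sub ((d0.pow 2).const_mul (lam / 2))
    refine D.congr_deriv ?_
    simp only [odeLHS, ha2, ha5, Pi.pow_apply, Pi.mul_apply, Pi.add_apply]
    push_cast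
    ring
  refine ⟨fun h hh z => (key h hh z).deriv, fun h hh hode z₁ z₂ => ?_⟩
  exact is_const_of_deriv_eq_zero (fun z => (key h hh z).differentiableAt)
    (fun z => by rw [(key h hh z).deriv, hode z, mul_zero]) z₁ z₂
end

section
/- Suppose a_1 = (5/49)a_6^3 − (1/49)a_6^2 a_5 − (30/49)a_6^2 a_7 + (3/49)a_6 a_5 a_7 + (225/196)a_6 a_7^2 − (9/196)a_5 a_7^2 − (135/196)a_7^3 + (3/7)a_6 a_4 + (2/21)a_6 a_2 − (9/14)a_4 a_7 − (1/7)a_2 a_7 and a_3 = −(5/7)a_6^2 + (1/7)a_5 a_6 + (45/14)a_6 a_7 − (3/14)a_5 a_7 − (45/14)a_7^2 + a_4, and let λ ∈ ℝ. Then Q_2 = (1/14)(2a_6 − 3a_7) h^2 + h'' is an integrating factor of the travelling wave ODE: there exists a smooth function Φ : ℝ^7 → ℝ such that for every smooth function h : ℝ → ℝ, d/dz [ Φ(h, h', h'', …, h^{(6)}) ] = ((1/14)(2a_6 − 3a_7) h^2 + h'') · ( h^{(7)} + a_7 h h^{(5)} + a_6 h' h^{(4)} + a_5 h'' h''' + a_4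 h^2 h''' + a_3 h h' h'' + a_2 (h')^3 + a_1 h^3 h' − λ h' ) identically on ℝ. -/
/-- The first integral as a polynomial in the jet `u = (h, h', …, h⁽⁶⁾)`, with `c` the
coefficient of `h²` in the integrating factor. The parameters `A`, `B`, `E`, `F`, `G` are the
coefficients of `u 0 * u 2 * u 5`, `u 1 * u 2 * u 4`, `u 0 ^ 2 * u 1 * u 4`,
`u 0 ^ 2 * u 2 * u 3` and `u 0 ^ 3 * u 1 * u 2` that are left, during the integration by parts,
when the respective monomial is to be integrated. -/
noncomputable def firstIntegral (a1 a2 a4 a5 a7 lam c A B E F G : ℝ) (u : Fin 7 → ℝ) : ℝ :=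
  (u 2 * u 6 - u 3 * u 5 + u 4 ^ 2 / 2)
    + (c * u 0 ^ 2 * u 6 - 2 * c * u 0 * u 1 * u 5 + A * u 0 * u 2 * u 4
      + 2 * c * u 1 ^ 2 * u 4 - A / 2 * u 0 * u 3 ^ 2 + B * u 1 * u 2 * u 3
      + (a5 - B) / 3 * u 2 ^ 3)
    + (c * a7 * u 0 ^ 3 * u 4 + E * u 0 ^ 2 * u 1 * u 3 + F / 2 * u 0 ^ 2 * u 2 ^ 2
      - 2 * E * u 0 * u 1 ^ 2 * u 2 + (a2 + 2 * E) / 4 * u 1 ^ 4)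
    + (c * a4 * u 0 ^ 4 * u 2 + G / 2 * u 0 ^ 3 * u 1 ^ 2)
    + c * a1 / 6 * u 0 ^ 6 - lam * c / 3 * u 0 ^ 3 - lam / 2 * u 1 ^ 2

/-- under the stated parameter constraints on `a1` and `a3`,
`Q₂ = (1/14)(2 a6 - 3 a7) h² + h''` is an integrating factor of the travelling wave ODE:
there is a smooth `Φ : ℝ⁷ → ℝ`, evaluated on `(h, h', …, h⁽⁶⁾)`, whose total
`z`-derivative equals `Q₂` times the left-hand side of the ODE, for every smooth `h`. -/
theorem integrating_factor_Q2 (a1 a2 a3 a4 a5 a6 a7 lam : ℝ)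
    (ha1 : a1 = (5 / 49) * a6 ^ 3 - (1 / 49) * a6 ^ 2 * a5 - (30 / 49) * a6 ^ 2 * a7
      + (3 / 49) * a6 * a5 * a7 + (225 / 196) * a6 * a7 ^ 2 - (9 / 196) * a5 * a7 ^ 2
      - (135 / 196) * a7 ^ 3 + (3 / 7) * a6 * a4 + (2 / 21) * a6 * a2
      - (9 / 14) * a4 * a7 - (1 / 7) * a2 * a7)
    (ha3 : a3 = -(5 / 7) * a6 ^ 2 + (1 / 7) * a5 * a6 + (45 / 14) * a6 * a7
      - (3 / 14) * a5 * a7 - (45 / 14) * a7 ^ 2 + a4) :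
    ∃ Φ : (Fin 7 → ℝ) → ℝ, ContDiff ℝ (⊤ : ℕ∞) Φ ∧
      ∀ h : ℝ → ℝ, ContDiff ℝ (⊤ : ℕ∞) h → ∀ z : ℝ,
        deriv (fun z' => Φ (fun i : Fin 7 => iteratedDeriv i.1 h z')) z
          = ((1 / 14) * (2 * a6 - 3 * a7) * (h z) ^ 2 + iteratedDeriv 2 h z)
              * odeLHS a1 a2 a3 a4 a5 a6 a7 lam h z := by
  let c := (1 / 14) * (2 * a6 - 3 * a7)
  let A := 2 * c + a7
  let B := a6 - A - 4 * c
  let E := c * a6 - 3 * c * a7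
  let F := c * a5 + a4 - E
  let G := c * a3 + a1 - 4 * c * a4
  refine ⟨firstIntegral a1 a2 a4 a5 a7 lam c A B E F G, ?_, fun h hh z => ?_⟩
  · unfold firstIntegral
    fun_prop
  have hd (k : ℕ) : HasDerivAt (iteratedDeriv k h) (iteratedDeriv (k + 1) h z) z := by
    rw [iteratedDeriv_succ]
    exact ((hh.differentiable_iteratedDeriv k (by exact_mod_cast ENat.natCast_lt_top k)) z).hasDerivAt
  have h0 := hd 0
  have h1 := hd 1
  have h2 := hd 2
  have h3 := hd 3
  have h4 := hd 4
  have h5 := hd 5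
  have h6 := hd 6
  -- The parts of degree 2 to 5 free of `lam`, differentiated term by term.
  have d2 := ((h2.mul h6).sub (h3.mul h5)).add ((h4.pow 2).div_const 2)
  have d3 := (((((((((h0.pow 2).const_mul c).mul h6).sub
      (((h0.const_mul (2 * c)).mul h1).mul h5)).add
      (((h0.const_mul A).mul h2).mul h4)).add
      (((h1.pow 2).const_mul (2 * c)).mul h4)).sub
      ((h0.const_mul (A / 2)).mul (h3.pow 2))).add
      (((h1.const_mul B).mul h2).mul h3)).add
      ((h2.pow 3).const_mul ((a5 - B) / 3)))
  have d4 := (((((((h0.pow 3).const_mul (c * a7)).mul h4).add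
      ((((h0.pow 2).const_mul E).mul h1).mul h3)).add
      (((h0.pow 2).const_mul (F / 2)).mul (h2.pow 2))).sub
      (((h0.const_mul (2 * E)).mul (h1.pow 2)).mul h2)).add
      ((h1.pow 4).const_mul ((a2 + 2 * E) / 4)))
  have d5 := ((((h0.pow 4).const_mul (c * a4)).mul h2).add
      (((h0.pow 3).const_mul (G / 2)).mul (h1.pow 2)))
  have key := (((((d2.add d3).add d4).add d5).add ((h0.pow 6).const_mul (c * a1 / 6))).sub
    ((h0.pow 3).const_mul (lam * c / 3))).sub ((h1.pow 2).const_mul (lam / 2))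
  -- The sum of monomials in `key` unfolds definitionally to `firstIntegral` along the jet of `h`.
  refine (HasDerivAt.deriv (f := fun z' => firstIntegral a1 a2 a4 a5 a7 lam c A B E F G
    (fun i : Fin 7 => iteratedDeriv i.1 h z')) key).trans ?_
  simp only [Pi.mul_apply, Pi.pow_apply, odeLHS,
    iteratedDeriv_zero, zero_add, iteratedDeriv_one, Nat.reduceAdd]
  simp only [G, F, E, B, A, c, ha1, ha3]
  push_cast
  ring
end

section
/- Suppose a_1 = −(1/147)(a_6 − 4a_7)(4a_6^2 − 18a_6 a_7 + 8a_7^2 + 49a_4), a_2 = (1/7)a_6^2 − (9/14)a_6 a_7 + (2/7)a_7^2 + 2a_4, a_3 = (2/7)a_6^2 − (9/7)a_6 a_7 + (4/7)a_7^2 + 6a_4, and a_5 = 2a_6 − a_7, and let λ ∈ ℝ. Then Q_4 = ((4/147)a_6^2 + (8/147)a_7^2 + (1/3)a_4 − (6/49)a_6 a_7) h^3 + ((2/7)a_6 − (1/7)a_7) h h'' + ((1/7)a_6 − (1/14)a_7) (h')^2 + h^{(4)} is an integrating factor of the travelling wave ODE: there exists a smooth function Φ : ℝ^9 → ℝ such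 that for every smooth function h : ℝ → ℝ, d/dz [ Φ(h, h', h'', …, h^{(8)}) ] = Q_4 · ( h^{(7)} + a_7 h h^{(5)} + a_6 h' h^{(4)} + a_5 h'' h''' + a_4 h^2 h''' + a_3 h h' h'' + a_2 (h')^3 + a_1 h^3 h' − λ h' ) identically on ℝ. -/
/-- `Q = k h³ + c h h'' + (c / 2) h'² + h⁽⁴⁾` as a polynomial in the jet `u i = h⁽ⁱ⁾`. -/
noncomputable def jetQ (k c : ℝ) (u : Fin 9 → ℝ) : ℝ :=
  k * u 0 ^ 3 + c * u 0 * u 2 + c / 2 * u 1 ^ 2 + u 4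

/-- The total derivative of `jetQ k c`. -/
noncomputable def jetQ1 (k c : ℝ) (u : Fin 9 → ℝ) : ℝ :=
  3 * k * u 0 ^ 2 * u 1 + 2 * c * u 1 * u 2 + c * u 0 * u 3 + u 5

/-- The second total derivative of `jetQ k c`. -/
noncomputable def jetQ2 (k c : ℝ) (u : Fin 9 → ℝ) : ℝ :=
  3 * k * u 0 ^ 2 * u 2 + 6 * k * u 0 * u 1 ^ 2 + 2 * c * u 2 ^ 2 + 3 * c * u 1 * u 3
    + c * u 0 * u 4 + u 6

/-- The third total derivative of `jetQ k c`. -/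
noncomputable def jetQ3 (k c : ℝ) (u : Fin 9 → ℝ) : ℝ :=
  3 * k * u 0 ^ 2 * u 3 + 18 * k * u 0 * u 1 * u 2 + 6 * k * u 1 ^ 3 + 7 * c * u 2 * u 3
    + 4 * c * u 1 * u 4 + c * u 0 * u 5 + u 7

/-- The polynomial `H` whose total derivative is `h' Q`. -/
noncomputable def jetH (k c : ℝ) (u : Fin 9 → ℝ) : ℝ :=
  k / 4 * u 0 ^ 4 + c / 2 * u 0 * u 1 ^ 2 + u 1 * u 3 - u 2 ^ 2 / 2

/-- The jet `(h, h', …, h⁽⁸⁾)` of `h` at `z`. -/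
noncomputable def jet (h : ℝ → ℝ) (z : ℝ) : Fin 9 → ℝ := fun i => iteratedDeriv i.1 h z

lemma hasDerivAt_jet {h : ℝ → ℝ} (hh : ContDiff ℝ (⊤ : ℕ∞) h) (z : ℝ)
    (i j : Fin 9) (hij : j.1 = i.1 + 1) :
    HasDerivAt (fun x => jet h x i) (jet h z j) z := by
  have hd : Differentiable ℝ (iteratedDeriv i.1 h) :=
    hh.differentiable_iteratedDeriv i.1 (by exact_mod_cast WithTop.coe_lt_top (i.1 : ℕ))
  have := (hd z).hasDerivAt
  simpa only [jet, hij, iteratedDeriv_succ] using this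

lemma hasDerivAt_jetQ {h : ℝ → ℝ} (hh : ContDiff ℝ (⊤ : ℕ∞) h) (k c z : ℝ) :
    HasDerivAt (fun x => jetQ k c (jet h x)) (jetQ1 k c (jet h z)) z := by
  have h0 := hasDerivAt_jet hh z 0 1 rfl
  have h1 := hasDerivAt_jet hh z 1 2 rfl
  have h2 := hasDerivAt_jet hh z 2 3 rfl
  have h4 := hasDerivAt_jet hh z 4 5 rfl
  refine (((((h0.fun_pow 3).const_mul k).fun_add ((h0.const_mul c).fun_mul h2)).fun_add
    ((h1.fun_pow 2).const_mul (c / 2))).fun_add h4).congr_deriv ?_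
  simp only [jetQ1]
  push_cast
  ring

lemma hasDerivAt_jetQ1 {h : ℝ → ℝ} (hh : ContDiff ℝ (⊤ : ℕ∞) h) (k c z : ℝ) :
    HasDerivAt (fun x => jetQ1 k c (jet h x)) (jetQ2 k c (jet h z)) z := by
  have h0 := hasDerivAt_jet hh z 0 1 rfl
  have h1 := hasDerivAt_jet hh z 1 2 rfl
  have h2 := hasDerivAt_jet hh z 2 3 rfl
  have h3 := hasDerivAt_jet hh z 3 4 rfl
  have h5 := hasDerivAt_jet hh z 5 6 rfl
  refine ((((((h0.fun_pow 2).const_mul (3 * k)).fun_mul h1).fun_add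
    ((h1.const_mul (2 * c)).fun_mul h2)).fun_add
    ((h0.const_mul c).fun_mul h3)).fun_add h5).congr_deriv ?_
  simp only [jetQ2]
  push_cast
  ring

lemma hasDerivAt_jetQ2 {h : ℝ → ℝ} (hh : ContDiff ℝ (⊤ : ℕ∞) h) (k c z : ℝ) :
    HasDerivAt (fun x => jetQ2 k c (jet h x)) (jetQ3 k c (jet h z)) z := by
  have h0 := hasDerivAt_jet hh z 0 1 rfl
  have h1 := hasDerivAt_jet hh z 1 2 rfl
  have h2 := hasDerivAt_jet hh z 2 3 rfl
  have h3 := hasDerivAt_jet hh z 3 4 rfl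
  have h4 := hasDerivAt_jet hh z 4 5 rfl
  have h6 := hasDerivAt_jet hh z 6 7 rfl
  refine ((((((((h0.fun_pow 2).const_mul (3 * k)).fun_mul h2).fun_add
    ((h0.const_mul (6 * k)).fun_mul (h1.fun_pow 2))).fun_add
    ((h2.fun_pow 2).const_mul (2 * c))).fun_add
    ((h1.const_mul (3 * c)).fun_mul h3)).fun_add
    ((h0.const_mul c).fun_mul h4)).fun_add h6).congr_deriv ?_
  simp only [jetQ3]
  push_cast
  ring

lemma hasDerivAt_jetH {h : ℝ → ℝ} (hh : ContDiff ℝ (⊤ : ℕ∞) h) (k c z : ℝ) :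
    HasDerivAt (fun x => jetH k c (jet h x)) (jet h z 1 * jetQ k c (jet h z)) z := by
  have h0 := hasDerivAt_jet hh z 0 1 rfl
  have h1 := hasDerivAt_jet hh z 1 2 rfl
  have h2 := hasDerivAt_jet hh z 2 3 rfl
  have h3 := hasDerivAt_jet hh z 3 4 rfl
  refine (((((h0.fun_pow 4).const_mul (k / 4)).fun_add
    ((h0.const_mul (c / 2)).fun_mul (h1.fun_pow 2))).fun_add
    (h1.fun_mul h3)).fun_sub ((h2.fun_pow 2).div_const 2)).congr_deriv ?_
  simp only [jetQ]
  push_cast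
  ring

/-- under the stated parameter constraints,
`Q₄ = ((4/147) a6² + (8/147) a7² + (1/3) a4 - (6/49) a6 a7) h³
 + ((2/7) a6 - (1/7) a7) h h'' + ((1/7) a6 - (1/14) a7) (h')² + h⁽⁴⁾`
is an integrating factor of the travelling wave ODE: there is a smooth `Φ : ℝ⁹ → ℝ`,
evaluated on `(h, h', …, h⁽⁸⁾)`, whose total `z`-derivative equals `Q₄` times the
left-hand side of the ODE, for every smooth `h`. -/
theorem integrating_factor_Q4 (a1 a2 a3 a4 a5 a6 a7 lam : ℝ)
    (ha1 : a1 = -(1 / 147) * (a6 - 4 * a7)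
      * (4 * a6 ^ 2 - 18 * a6 * a7 + 8 * a7 ^ 2 + 49 * a4))
    (ha2 : a2 = (1 / 7) * a6 ^ 2 - (9 / 14) * a6 * a7 + (2 / 7) * a7 ^ 2 + 2 * a4)
    (ha3 : a3 = (2 / 7) * a6 ^ 2 - (9 / 7) * a6 * a7 + (4 / 7) * a7 ^ 2 + 6 * a4)
    (ha5 : a5 = 2 * a6 - a7) :
    ∃ Φ : (Fin 9 → ℝ) → ℝ, ContDiff ℝ (⊤ : ℕ∞) Φ ∧
      ∀ h : ℝ → ℝ, ContDiff ℝ (⊤ : ℕ∞) h → ∀ z : ℝ,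
        deriv (fun z' => Φ (fun i : Fin 9 => iteratedDeriv i.1 h z')) z
          = (((4 / 147) * a6 ^ 2 + (8 / 147) * a7 ^ 2 + (1 / 3) * a4
                - (6 / 49) * a6 * a7) * (h z) ^ 3
              + ((2 / 7) * a6 - (1 / 7) * a7) * h z * iteratedDeriv 2 h z
              + ((1 / 7) * a6 - (1 / 14) * a7) * (deriv h z) ^ 2
              + iteratedDeriv 4 h z)
              * odeLHS a1 a2 a3 a4 a5 a6 a7 lam h z := by
  obtain ⟨c, hc⟩ : ∃ c : ℝ, c = (2 * a6 - a7) / 7 := ⟨_, rfl⟩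
  obtain ⟨α, hα⟩ : ∃ α : ℝ, α = a7 - c := ⟨_, rfl⟩
  obtain ⟨k, hk⟩ : ∃ k : ℝ, k = (4 / 147) * a6 ^ 2 + (8 / 147) * a7 ^ 2 + (1 / 3) * a4
    - (6 / 49) * a6 * a7 := ⟨_, rfl⟩
  refine ⟨fun u => jetQ k c u * jetQ2 k c u - jetQ1 k c u ^ 2 / 2
    + α / 2 * u 0 * jetQ k c u ^ 2 - lam * jetH k c u, ?_, ?_⟩
  · unfold jetQ jetQ1 jetQ2 jetH
    fun_prop
  · intro h hh z
    have d0 := hasDerivAt_jet hh z 0 1 rfl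
    have dQ := hasDerivAt_jetQ hh k c z
    have dQ1 := hasDerivAt_jetQ1 hh k c z
    have dQ2 := hasDerivAt_jetQ2 hh k c z
    have dH := hasDerivAt_jetH hh k c z
    have dΦ := (((dQ.fun_mul dQ2).fun_sub ((dQ1.fun_pow 2).div_const 2)).fun_add
      ((d0.const_mul (α / 2)).fun_mul (dQ.fun_pow 2))).fun_sub (dH.const_mul lam)
    have hQ : ((4 / 147) * a6 ^ 2 + (8 / 147) * a7 ^ 2 + (1 / 3) * a4
          - (6 / 49) * a6 * a7) * (h z) ^ 3
        + ((2 / 7) * a6 - (1 / 7) * a7) * h z * iteratedDeriv 2 h z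
        + ((1 / 7) * a6 - (1 / 14) * a7) * (deriv h z) ^ 2
        + iteratedDeriv 4 h z = jetQ k c (jet h z) := by
      simp [jetQ, jet, hk, hc, iteratedDeriv_zero, iteratedDeriv_one]
      ring
    -- The operator factorisation `E = Q''' + α h Q' + (α / 2) h' Q - lam h'`.
    have hE : odeLHS a1 a2 a3 a4 a5 a6 a7 lam h z
        = jetQ3 k c (jet h z) + α * jet h z 0 * jetQ1 k c (jet h z)
          + α / 2 * jet h z 1 * jetQ k c (jet h z) - lam * jet h z 1 := by
      simp [odeLHS, jetQ, jetQ1, jetQ3, jet, iteratedDeriv_zero, iteratedDeriv_one]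
      subst ha1 ha2 ha3 ha5 hk hα hc
      ring
    rw [hQ, hE]
    refine dΦ.deriv.trans ?_
    push_cast
    ring
end

section
/- Conservation of the conserved quantity ∫ u dx: suppose a_2 = −a_4 + (1/2)a_3, and let u : ℝ × ℝ → ℝ be a smooth solution of E[u] = 0 such that there exists a compact set K ⊆ ℝ with the support of x ↦ u(x,t) contained in K for every t. Then the function t ↦ ∫_ℝ u(x,t) dx is constant. -/
open MeasureTheory

/-- The spatial flux of the density `u`, as a function of a single time slice `f = u(·, t)`. -/
noncomputable def kdvFlux (a1 a2 a4 a5 a6 a7 : ℝ) (f : ℝ → ℝ) (x : ℝ) : ℝ :=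
  a1 / 4 * f x ^ 4
    + a4 * (f x ^ 2 * iteratedDeriv 2 f x)
    + a2 * (f x * iteratedDeriv 1 f x ^ 2)
    + a5 / 2 * iteratedDeriv 2 f x ^ 2
    + a6 * (iteratedDeriv 1 f x * iteratedDeriv 3 f x - iteratedDeriv 2 f x ^ 2 / 2)
    + a7 * (f x * iteratedDeriv 4 f x - iteratedDeriv 1 f x * iteratedDeriv 3 f x
        + iteratedDeriv 2 f x ^ 2 / 2)
    + iteratedDeriv 6 f x

lemma hasDerivAt_iteratedDeriv_of_smooth_s16 {f : ℝ → ℝ} (hf : ContDiff ℝ (⊤ : ℕ∞) f) (n : ℕ) (x : ℝ) :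
    HasDerivAt (iteratedDeriv n f) (iteratedDeriv (n + 1) f x) x := by
  rw [iteratedDeriv_succ]
  refine DifferentiableAt.hasDerivAt ?_
  exact (hf.differentiable_iteratedDeriv n (by exact_mod_cast WithTop.coe_lt_top n)) x

lemma hasDerivAt_kdvFlux (a1 a2 a3 a4 a5 a6 a7 : ℝ) (ha2 : a2 = -a4 + (1 / 2) * a3)
    {f : ℝ → ℝ} (hf : ContDiff ℝ (⊤ : ℕ∞) f) (x : ℝ) :
    HasDerivAt (kdvFlux a1 a2 a4 a5 a6 a7 f)
      (a1 * f x ^ 3 * iteratedDeriv 1 f x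
        + a2 * iteratedDeriv 1 f x ^ 3
        + a3 * f x * iteratedDeriv 1 f x * iteratedDeriv 2 f x
        + a4 * f x ^ 2 * iteratedDeriv 3 f x
        + a5 * iteratedDeriv 2 f x * iteratedDeriv 3 f x
        + a6 * iteratedDeriv 1 f x * iteratedDeriv 4 f x
        + a7 * f x * iteratedDeriv 5 f x
        + iteratedDeriv 7 f x) x := by
  have h := hasDerivAt_iteratedDeriv_of_smooth_s16 hf
  have h0 : HasDerivAt f (iteratedDeriv 1 f x) x := by simpa using h 0 x
  have h1 := h 1 x
  have h2 := h 2 x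
  have h3 := h 3 x
  have h4 := h 4 x
  have h6 := h 6 x
  have key := (((((((h0.pow 4).const_mul (a1 / 4)).add
    (((h0.pow 2).mul h2).const_mul a4)).add
    ((h0.mul (h1.pow 2)).const_mul a2)).add
    ((h2.pow 2).const_mul (a5 / 2))).add
    (((h1.mul h3).sub ((h2.pow 2).div_const 2)).const_mul a6)).add
    ((((h0.mul h4).sub (h1.mul h3)).add ((h2.pow 2).div_const 2)).const_mul a7)).add h6
  have ha3 : a3 = 2 * (a2 + a4) := by rw [ha2]; ring
  refine key.congr_deriv ?_
  rw [ha3]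
  simp only [Pi.pow_apply]
  norm_num
  ring

lemma iteratedDeriv_hasCompactSupport {f : ℝ → ℝ} (hf : HasCompactSupport f) (n : ℕ) :
    HasCompactSupport (iteratedDeriv n f) := by
  induction n with
  | zero => simpa using hf
  | succ n ih => rw [iteratedDeriv_succ]; exact ih.deriv

lemma kdvFlux_hasCompactSupport (a1 a2 a4 a5 a6 a7 : ℝ) {f : ℝ → ℝ} (hf : HasCompactSupport f) :
    HasCompactSupport (kdvFlux a1 a2 a4 a5 a6 a7 f) := by
  have h := iteratedDeriv_hasCompactSupport hf
  -- Each monomial of the flux contains `f`, `f'`, `f''` or `f⁽⁶⁾` as a factor.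
  refine HasCompactSupport.intro
    (K := tsupport f ∪ tsupport (iteratedDeriv 1 f) ∪ tsupport (iteratedDeriv 2 f)
      ∪ tsupport (iteratedDeriv 6 f))
    (((hf.isCompact.union (h 1).isCompact).union (h 2).isCompact).union (h 6).isCompact) ?_
  intro x hx
  simp only [Set.mem_union, not_or] at hx
  obtain ⟨⟨⟨hx0, hx1⟩, hx2⟩, hx6⟩ := hx
  simp [kdvFlux, image_eq_zero_of_notMem_tsupport hx0, image_eq_zero_of_notMem_tsupport hx1,
    image_eq_zero_of_notMem_tsupport hx2, image_eq_zero_of_notMem_tsupport hx6]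

lemma hasDerivAt_dtU {u : ℝ × ℝ → ℝ} (hu : ContDiff ℝ (⊤ : ℕ∞) u) (x t : ℝ) :
    HasDerivAt (fun t' => u (x, t')) (dtU u x t) t := by
  have hd : Differentiable ℝ u := hu.differentiable (by simp)
  exact DifferentiableAt.hasDerivAt (by fun_prop)

lemma continuous_dtU {u : ℝ × ℝ → ℝ} (hu : ContDiff ℝ (⊤ : ℕ∞) u) :
    Continuous (fun p : ℝ × ℝ => dtU u p.1 p.2) := by
  have hd : Differentiable ℝ u := hu.differentiable (by simp)
  have heq : (fun p : ℝ × ℝ => dtU u p.1 p.2) = fun p => fderiv ℝ u p ((0 : ℝ), (1 : ℝ)) := by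
    funext p
    have h1 : HasDerivAt (fun t' : ℝ => (p.1, t')) ((0 : ℝ), (1 : ℝ)) p.2 :=
      (hasDerivAt_const _ _).prodMk (hasDerivAt_id _)
    exact ((hd (p.1, p.2)).hasFDerivAt.comp_hasDerivAt p.2 h1).deriv
  rw [heq]
  exact (hu.continuous_fderiv (by simp)).clm_apply continuous_const

lemma dtU_eq_zero {u : ℝ × ℝ → ℝ} {K : Set ℝ}
    (hsupp : ∀ t : ℝ, Function.support (fun x => u (x, t)) ⊆ K) {x : ℝ} (hx : x ∉ K) (t : ℝ) :
    dtU u x t = 0 := by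
  have h : (fun t' => u (x, t')) = fun _ => 0 := by
    funext t'
    by_contra hne
    exact hx (hsupp t' hne)
  simp [dtU, h]

lemma slice_hasCompactSupport {u : ℝ × ℝ → ℝ} {K : Set ℝ} (hK : IsCompact K)
    (hsupp : ∀ t : ℝ, Function.support (fun x => u (x, t)) ⊆ K) (t : ℝ) :
    HasCompactSupport (fun x => u (x, t)) :=
  HasCompactSupport.intro hK fun x hx => by
    by_contra hne
    exact hx (hsupp t hne)

lemma integral_dtU_eq_zero (a1 a2 a3 a4 a5 a6 a7 : ℝ)
    (ha2 : a2 = -a4 + (1 / 2) * a3)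
    (u : ℝ × ℝ → ℝ) (hu : ContDiff ℝ (⊤ : ℕ∞) u)
    (hsol : ∀ x t : ℝ, kdvE a1 a2 a3 a4 a5 a6 a7 u x t = 0)
    (K : Set ℝ) (hK : IsCompact K)
    (hsupp : ∀ t : ℝ, Function.support (fun x => u (x, t)) ⊆ K) (t : ℝ) :
    ∫ x : ℝ, dtU u x t = 0 := by
  set f : ℝ → ℝ := fun x => u (x, t) with hfdef
  have hf : ContDiff ℝ (⊤ : ℕ∞) f := hu.comp (contDiff_id.prodMk contDiff_const)
  have hfs : HasCompactSupport f := slice_hasCompactSupport hK hsupp t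
  have hX : ∀ x, HasDerivAt (kdvFlux a1 a2 a4 a5 a6 a7 f) (-dtU u x t) x := by
    intro x
    refine (hasDerivAt_kdvFlux a1 a2 a3 a4 a5 a6 a7 ha2 hf x).congr_deriv ?_
    have := hsol x t
    simp only [kdvE, dxN] at this
    simp only [hfdef]
    linarith
  have hXc : Continuous (kdvFlux a1 a2 a4 a5 a6 a7 f) :=
    continuous_iff_continuousAt.2 fun x => (hX x).continuousAt
  have hXi := hXc.integrable_of_hasCompactSupport (μ := volume)
    (kdvFlux_hasCompactSupport a1 a2 a4 a5 a6 a7 hfs)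
  have hc : Continuous (fun x => dtU u x t) :=
    (continuous_dtU hu).comp (continuous_id.prodMk continuous_const)
  have hdi : Integrable (fun x => dtU u x t) :=
    hc.integrable_of_hasCompactSupport
      (HasCompactSupport.intro hK fun x hx => dtU_eq_zero hsupp hx t)
  have h0 := integral_eq_zero_of_hasDerivAt_of_integrable hX hdi.neg hXi
  rw [integral_neg] at h0
  linarith

lemma hasDerivAt_integral_slice {u : ℝ × ℝ → ℝ} (hu : ContDiff ℝ (⊤ : ℕ∞) u)
    {K : Set ℝ} (hK : IsCompact K)
    (hsupp : ∀ t : ℝ, Function.support (fun x => u (x, t)) ⊆ K) (t : ℝ) :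
    HasDerivAt (fun s => ∫ x : ℝ, u (x, s)) (∫ x : ℝ, dtU u x t) t := by
  have hc : ∀ s, Continuous (fun x => u (x, s)) := fun s =>
    hu.continuous.comp (continuous_id.prodMk continuous_const)
  obtain ⟨C, hC⟩ := (hK.prod (isCompact_closedBall t 1)).exists_bound_of_continuousOn
    (continuous_dtU hu).continuousOn
  refine (hasDerivAt_integral_of_dominated_loc_of_deriv_le (μ := volume)
    (F := fun s x => u (x, s)) (F' := fun s x => dtU u x s) (s := Metric.ball t 1)
    (bound := K.indicator fun _ => C) (Metric.ball_mem_nhds t one_pos)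
    (Filter.Eventually.of_forall fun s => (hc s).aestronglyMeasurable)
    ((hc t).integrable_of_hasCompactSupport (slice_hasCompactSupport hK hsupp t))
    ?_ ?_ ?_ ?_).2
  · exact ((continuous_dtU hu).comp
      (continuous_id.prodMk continuous_const)).aestronglyMeasurable
  · refine Filter.Eventually.of_forall fun x s hs => ?_
    by_cases hx : x ∈ K
    · rw [Set.indicator_of_mem hx]
      exact hC (x, s) ⟨hx, Metric.ball_subset_closedBall hs⟩
    · rw [Set.indicator_of_notMem hx, dtU_eq_zero hsupp hx, norm_zero]
  · exact (integrable_indicator_iff hK.measurableSet).2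
      (integrableOn_const hK.measure_lt_top.ne)
  · exact Filter.Eventually.of_forall fun x s _ => hasDerivAt_dtU hu x s

/-- conservation of `∫ u dx`. If `a2 = -a4 + (1/2) a3` and `u` is a smooth
solution of the generalized seventh-order KdV equation whose spatial support is contained
in a fixed compact set `K` for all times, then `t ↦ ∫ u (x, t) dx` is constant. -/
theorem conserved_integral_u (a1 a2 a3 a4 a5 a6 a7 : ℝ)
    (ha2 : a2 = -a4 + (1 / 2) * a3)
    (u : ℝ × ℝ → ℝ) (hu : ContDiff ℝ (⊤ : ℕ∞) u)
    (hsol : ∀ x t : ℝ, kdvE a1 a2 a3 a4 a5 a6 a7 u x t = 0)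
    (K : Set ℝ) (hK : IsCompact K)
    (hsupp : ∀ t : ℝ, Function.support (fun x => u (x, t)) ⊆ K) :
    ∀ t₁ t₂ : ℝ, ∫ x : ℝ, u (x, t₁) = ∫ x : ℝ, u (x, t₂) := by
  have h : ∀ t, HasDerivAt (fun s => ∫ x : ℝ, u (x, s)) 0 t := fun t => by
    rw [← integral_dtU_eq_zero a1 a2 a3 a4 a5 a6 a7 ha2 u hu hsol K hK hsupp t]
    exact hasDerivAt_integral_slice hu hK hsupp t
  exact is_const_of_deriv_eq_zero (fun t => (h t).differentiableAt) fun t => (h t).deriv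
end

section
/- Conservation of the conserved quantity ∫ u^2 dx: suppose a_2 = −3a_4 + a_3 and a_5 = 5a_6 − 10a_7, and let u : ℝ × ℝ → ℝ be a smooth solution of E[u] = 0 such that there exists a compact set K ⊆ ℝ with the support of x ↦ u(x,t) contained in K for every t. Then the function t ↦ ∫_ℝ (1/2) u(x,t)^2 dx is constant. -/
open MeasureTheory

/-- The differential identity behind the conservation law. Here `w n` plays the role of `u_{nx}`
at a fixed time, and the function being differentiated is the flux `X`: under the two constraints
on the coefficients, `u` times the spatial part of `E[u]` is the total `x`-derivative `∂ₓ X`. Modulo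
total derivatives that product is `(a2 - a3 + 3 a4) u u_x ^ 3 + (5 a6 - 10 a7 - a5) / 2 u_x u_{2x} ^ 2`,
so each constraint removes one obstruction. -/
lemma flux_hasDerivAt (a1 a2 a3 a4 a5 a6 a7 : ℝ)
    (ha2 : a2 = -3 * a4 + a3) (ha5 : a5 = 5 * a6 - 10 * a7) (w : ℕ → ℝ → ℝ)
    (hw : ∀ n x, HasDerivAt (w n) (w (n + 1) x) x) (x : ℝ) :
    HasDerivAt (fun x => a1 / 5 * w 0 x ^ 5 + a4 * (w 0 x ^ 3 * w 2 x)
        + (a3 - 3 * a4) / 2 * (w 0 x ^ 2 * w 1 x ^ 2) + a7 * (w 0 x ^ 2 * w 4 x)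
        + (a6 - 2 * a7) * (w 0 x * w 1 x * w 3 x + 2 * (w 0 x * w 2 x ^ 2) - w 1 x ^ 2 * w 2 x)
        + (w 0 x * w 6 x - w 1 x * w 5 x + w 2 x * w 4 x - w 3 x ^ 2 / 2))
      (w 0 x * (a1 * w 0 x ^ 3 * w 1 x + a2 * w 1 x ^ 3 + a3 * w 0 x * w 1 x * w 2 x
        + a4 * w 0 x ^ 2 * w 3 x + a5 * w 2 x * w 3 x + a6 * w 1 x * w 4 x
        + a7 * w 0 x * w 5 x + w 7 x)) x := by
  subst ha2 ha5
  have h0 := hw 0 x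
  have h1 := hw 1 x
  have h2 := hw 2 x
  have h3 := hw 3 x
  have h4 := hw 4 x
  have h5 := hw 5 x
  have h6 := hw 6 x
  refine HasDerivAt.congr_deriv (((((((h0.pow 5).const_mul (a1 / 5)).add (((h0.pow 3).mul h2).const_mul a4)).add
    (((h0.pow 2).mul (h1.pow 2)).const_mul ((a3 - 3 * a4) / 2))).add
    (((h0.pow 2).mul h4).const_mul a7)).add
    (((((h0.mul h1).mul h3).add ((h0.mul (h2.pow 2)).const_mul 2)).sub
      ((h1.pow 2).mul h2)).const_mul (a6 - 2 * a7))).add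
    ((((h0.mul h6).sub (h1.mul h5)).add (h2.mul h4)).sub ((h3.pow 2).div_const 2))) ?_
  norm_num
  ring

/-- conservation of `∫ u² dx`. If `a2 = -3 a4 + a3`, `a5 = 5 a6 - 10 a7`
and `u` is a smooth solution of the generalized seventh-order KdV equation whose spatial
support is contained in a fixed compact set `K` for all times, then
`t ↦ ∫ (1/2) u (x, t)² dx` is constant. -/
theorem conserved_integral_u_sq (a1 a2 a3 a4 a5 a6 a7 : ℝ)
    (ha2 : a2 = -3 * a4 + a3) (ha5 : a5 = 5 * a6 - 10 * a7)
    (u : ℝ × ℝ → ℝ) (hu : ContDiff ℝ (⊤ : ℕ∞) u)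
    (hsol : ∀ x t : ℝ, kdvE a1 a2 a3 a4 a5 a6 a7 u x t = 0)
    (K : Set ℝ) (hK : IsCompact K)
    (hsupp : ∀ t : ℝ, Function.support (fun x => u (x, t)) ⊆ K) :
    ∀ t₁ t₂ : ℝ,
      ∫ x : ℝ, (1 / 2) * (u (x, t₁)) ^ 2 = ∫ x : ℝ, (1 / 2) * (u (x, t₂)) ^ 2 := by
  intro t₁ t₂
  obtain ⟨R, hR0, hR⟩ : ∃ R : ℝ, 0 < R ∧ K ⊆ Set.Ioo (-R) R := by
    obtain ⟨R, hR0, hR⟩ := hK.isBounded.subset_ball_lt 0 0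
    exact ⟨R, hR0, by simpa [Real.ball_eq_Ioo] using hR⟩
  have hfull : ∀ t, ∫ x : ℝ, (1 / 2) * (u (x, t)) ^ 2
      = ∫ x in (-R)..R, (1 / 2) * (u (x, t)) ^ 2 := by
    intro t
    refine (intervalIntegral.integral_eq_integral_of_support_subset ?_).symm
    intro x hx
    apply Set.Ioo_subset_Ioc_self (hR (hsupp t _))
    intro h
    simp_all
  have hsm : ∀ t, ContDiff ℝ (⊤ : ℕ∞) (fun x => u (x, t)) := fun t =>
    hu.comp (contDiff_id.prodMk contDiff_const)
  have hzero : ∀ n t x, x ∉ K → dxN n u x t = 0 := by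
    intro n t x hx
    have hnear : (fun x' => u (x', t)) =ᶠ[nhds x] fun _ => 0 := by
      filter_upwards [hK.isClosed.isOpen_compl.mem_nhds hx] with y hy
      by_contra h
      exact hy (hsupp t h)
    rw [dxN, hnear.iteratedDeriv_eq n]
    simp
  have hstep : ∀ t n x, HasDerivAt (fun y => dxN n u y t) (dxN (n + 1) u x t) x := by
    intro t n x
    have hd : Differentiable ℝ (iteratedDeriv n (fun x => u (x, t))) :=
      (hsm t).differentiable_iteratedDeriv n (by exact_mod_cast WithTop.coe_lt_top _)
    have := (hd x).hasDerivAt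
    rw [← iteratedDeriv_succ] at this
    exact this
  have hdt : ∀ x t, HasDerivAt (fun s => u (x, s)) (dtU u x t) t := by
    intro x t
    have : ContDiff ℝ (⊤ : ℕ∞) (fun s => u (x, s)) :=
      hu.comp (contDiff_const.prodMk contDiff_id)
    exact ((this.differentiable (by simp)) t).hasDerivAt
  -- Joint continuity, needed for Fubini, comes from writing `u_t` through the total derivative.
  have hcont : Continuous (fun p : ℝ × ℝ => u p * dtU u p.1 p.2) := by
    have he : (fun p : ℝ × ℝ => dtU u p.1 p.2) = fun p => fderiv ℝ u p (0, 1) := by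
      funext p
      have h1 : HasFDerivAt u (fderiv ℝ u p) (p.1, p.2) :=
        ((hu.differentiable (by simp)) p).hasFDerivAt
      have h2 : HasDerivAt (fun s : ℝ => (p.1, s)) ((0 : ℝ), (1 : ℝ)) p.2 :=
        (hasDerivAt_const _ _).prodMk (hasDerivAt_id _)
      exact (h1.comp_hasDerivAt p.2 h2).deriv
    have hc : Continuous (fun p : ℝ × ℝ => dtU u p.1 p.2) := by
      rw [he]
      exact (hu.continuous_fderiv (by simp)).clm_apply continuous_const
    exact hu.continuous.mul hc
  -- On solutions `u u_t = -∂ₓ X`, and every term of `X` vanishes at `±R`, outside `K`.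
  have hflux : ∀ t, ∫ x in (-R)..R, u (x, t) * dtU u x t = 0 := by
    intro t
    have hI := intervalIntegral.integral_eq_sub_of_hasDerivAt (a := -R) (b := R)
      (f' := fun x => -(u (x, t) * dtU u x t))
      (fun x _ => (flux_hasDerivAt a1 a2 a3 a4 a5 a6 a7 ha2 ha5
        (fun n x => dxN n u x t) (hstep t) x).congr_deriv (by
          have h := hsol x t
          have h0 : dxN 0 u x t = u (x, t) := by simp [dxN]
          simp only [kdvE] at h
          simp only [h0]
          linear_combination u (x, t) * h))
      (by
        apply Continuous.intervalIntegrable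
        exact (hcont.comp (by fun_prop : Continuous fun x : ℝ => (x, t))).neg)
    have hzr : ∀ n, dxN n u R t = 0 := fun n => hzero n t R fun h => by simpa using hR h
    have hzl : ∀ n, dxN n u (-R) t = 0 := fun n => hzero n t (-R) fun h => by simpa using hR h
    simpa [hzr, hzl] using hI
  have htime : ∀ x, ∫ t in t₁..t₂, u (x, t) * dtU u x t
      = (1 / 2) * (u (x, t₂)) ^ 2 - (1 / 2) * (u (x, t₁)) ^ 2 := by
    intro x
    refine intervalIntegral.integral_eq_sub_of_hasDerivAt
      (f := fun t => (1 / 2) * (u (x, t)) ^ 2) (fun t _ => ?_) ?_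
    · refine (((hdt x t).pow 2).const_mul (1 / 2)).congr_deriv ?_
      norm_num
      ring
    · apply Continuous.intervalIntegrable
      exact hcont.comp (by fun_prop : Continuous fun t : ℝ => (x, t))
  have hint : ∀ t, IntervalIntegrable (fun x => (1 / 2) * (u (x, t)) ^ 2) volume (-R) R := by
    intro t
    apply Continuous.intervalIntegrable
    have := (hsm t).continuous
    fun_prop
  -- Fubini on the rectangle replaces differentiation under the integral sign.
  have hswap : ∫ x in (-R)..R, ∫ t in t₁..t₂, u (x, t) * dtU u x t = 0 := by
    rw [intervalIntegral_intervalIntegral_swap (F := fun x t => u (x, t) * dtU u x t)]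
    · simp [hflux]
    · exact (hcont.continuousOn.integrableOn_compact
        (isCompact_uIcc.prod isCompact_uIcc)).mono_set
        (Set.prod_mono Set.uIoc_subset_uIcc Set.uIoc_subset_uIcc)
  simp_rw [htime] at hswap
  rw [intervalIntegral.integral_sub (hint t₂) (hint t₁)] at hswap
  rw [hfull, hfull]
  linarith
end
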